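/- For any odd prime p, the trace of the multiplier polynomial P_{2,p} equals 2^{2p} − 2^{p+1}, and hence v_2(tr(P_{2,p})) = p + 1. -/

import Mathlib

open Polynomial Finset

noncomputable section

/-- The critical-orbit polynomials: `a 1 = c`, `a (i+1) = (a i)^2 + c`. -/
def a : ℕ → Polynomial ℤ
  | 0 => 0
  | n + 1 => (a n) ^ 2 + X

/-- The image of an integer polynomial in the field `ℚ(c)` of rational functions. -/
def toRF (f : Polynomial ℤ) : RatFunc ℚ :=
  algebraMap (Polynomial ℚ) (RatFunc ℚ) (f.map (Int.castRingHom ℚ))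

/-- The Möbius-product formula defining the Misiurewicz polynomial `G_{m,n}`. -/
def Gform (m n : ℕ) : RatFunc ℚ :=
  (∏ k ∈ n.divisors, (toRF (a (m + k - 1) + a (m - 1))) ^ (ArithmeticFunction.moebius (n / k))) *
    (if n ∣ (m - 1) then
      ∏ k ∈ n.divisors, (toRF (a k)) ^ (-(ArithmeticFunction.moebius (n / k)))
    else 1)

/-- `G` is the Misiurewicz polynomial `G_{m,n}`. -/
def IsMisiurewicz (m n : ℕ) (G : Polynomial ℤ) : Prop :=
  G.Monic ∧ toRF G = Gform m n

/-- The image of an integer polynomial in `ℂ[c]`. -/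
def c2 (f : Polynomial ℤ) : Polynomial ℂ := f.map (Int.castRingHom ℂ)

/-- The multiplier `λ_{m,n}(α) = 2^n ∏_{i=0}^{n−1} a_{m+i}(α)`. -/
def lam (m n : ℕ) (α : ℂ) : ℂ :=
  (2 : ℂ) ^ n * ∏ i ∈ range n, Polynomial.aeval α (a (m + i))

/-- `T f g`: the sum of `f` over the roots of `g`, with multiplicity. -/
def T (f g : Polynomial ℂ) : ℂ := (g.roots.map (fun c => f.eval c)).sum

/-- The trace of the multiplier polynomial `P_{m,n} = ∏_α (x − λ_{m,n}(α))`: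
the sum of the multipliers `λ_{m,n}(α)` over the roots `α` of `G_{m,n}`. -/
def trP (m n : ℕ) (G : Polynomial ℤ) : ℂ := ((c2 G).roots.map (lam m n)).sum

/-!
Put `F = a_{p+1} + a_1`. Since `G * (a_2 + a_1) = F` and `a_2 + a_1 = c (c + 2)`, the trace is the
sum of `λ` over the roots of `F`, minus `λ(0) = 0` and `λ(-2) = 4 ^ p`. At a root of `F` the last
factor `a_{p+1}` of `λ` equals `-a_1`, so `λ = -2 ^ p * k * A` there, where `A = a_p` and
`k = a_1 ⋯ a_{p-1}`.

The sum of a polynomial `h` over the roots of a monic `F` of degree `N` is the coefficient of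
`c ^ (N - 1)` in the remainder of `h * F'` modulo `F`. Here `F = A ^ 2 + 2 * c`, hence
`k * A * F' = 2 * k * A' * F + 2 * (k * A - 2 * c * k * A')`, and the last summand is the remainder.
Its top coefficient is `2 * (1 - 2 * deg A)`, with `deg A = 2 ^ (p - 1)`.
-/

section Semiring

variable {R : Type*} [Semiring R] {A : R[X]}

lemma degree_C_mul_X_lt_degree_sq (hA : A.Monic) (hpos : 0 < A.natDegree) (b : R) :
    (C b * X).degree < (A ^ 2).degree := by
  refine degree_lt_degree ?_
  rw [hA.natDegree_pow]
  exact ((natDegree_C_mul_le _ _).trans natDegree_X_le).trans_lt (by lia)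

lemma monic_sq_add_C_mul_X (hA : A.Monic) (hpos : 0 < A.natDegree) (b : R) :
    (A ^ 2 + C b * X).Monic :=
  (hA.pow 2).add_of_left (degree_C_mul_X_lt_degree_sq hA hpos b)

lemma natDegree_sq_add_C_mul_X (hA : A.Monic) (hpos : 0 < A.natDegree) (b : R) :
    (A ^ 2 + C b * X).natDegree = 2 * A.natDegree := by
  rw [natDegree_add_eq_left_of_degree_lt (degree_C_mul_X_lt_degree_sq hA hpos b), hA.natDegree_pow]

lemma coeff_X_mul_mul_derivative {k : R[X]} (hA : A.Monic) (hk : k.Monic)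
    (hdeg : A.natDegree = k.natDegree + 1) :
    (X * k * derivative A).coeff (A.natDegree + k.natDegree) = (A.natDegree : R) := by
  have hXk : (X * k).natDegree ≤ A.natDegree := by
    rw [hdeg, add_comm]
    exact natDegree_mul_le_of_le natDegree_X_le le_rfl
  have hA' : (derivative A).natDegree ≤ k.natDegree := by
    simpa [hdeg] using natDegree_derivative_le A
  rw [coeff_mul_add_eq_of_natDegree_le hXk hA', coeff_derivative, ← hdeg, hA.coeff_natDegree, hdeg,
    coeff_X_mul, hk.coeff_natDegree]
  simp

end Semiring

section CommRing

variable {R : Type*} [CommRing R] {S : Type*} [CommRing S] [IsDomain S] [Algebra R S]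

lemma mul_modByMonic_X_sub_C_mul {g : R[X]} (hg : g.Monic) (h : R[X]) (r : R) :
    h * g %ₘ ((X - C r) * g) = C (h.eval r) * g := by
  nontriviality R
  obtain ⟨q, hq⟩ : X - C r ∣ h - C (h.eval r) := X_sub_C_dvd_sub_C_eval
  refine (div_modByMonic_unique q _ ((monic_X_sub_C r).mul hg) ⟨?_, ?_⟩).2
  · linear_combination -g * hq
  · rw [← smul_eq_C_mul, hg.degree_mul, degree_X_sub_C]
    refine (degree_smul_le _ g).trans_lt ?_
    rw [degree_eq_natDegree hg.ne_zero]
    exact_mod_cast Nat.lt_one_add_iff.2 le_rfl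

/-- Modulo `F = ∏ (X - r)`, the summand `h * ∏_{r' ≠ r} (X - r')` of `h * F'` is congruent to
`h(r) * ∏_{r' ≠ r} (X - r')`. -/
lemma coeff_mul_derivative_modByMonic_prod_X_sub_C (h : R[X]) (s : Multiset R) :
    (h * derivative (s.map (X - C ·)).prod %ₘ (s.map (X - C ·)).prod).coeff (s.card - 1) =
      (s.map (h.eval ·)).sum := by
  classical
  nontriviality R
  have top_coeff_summand (r : R) (hr : r ∈ s) :
      (h * ((s.erase r).map (X - C ·)).prod %ₘ (s.map (X - C ·)).prod).coeff (s.card - 1) =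
        h.eval r := by
    have hmonic : ((s.erase r).map (X - C ·)).prod.Monic :=
      monic_multiset_prod_of_monic _ _ fun r' _ ↦ monic_X_sub_C r'
    have hdeg : ((s.erase r).map (X - C ·)).prod.natDegree = s.card - 1 := by
      rw [natDegree_multiset_prod_X_sub_C_eq_card, Multiset.card_erase_of_mem hr,
        Nat.pred_eq_sub_one]
    rw [← Multiset.prod_map_erase hr, mul_modByMonic_X_sub_C_mul hmonic, coeff_C_mul, ← hdeg,
      hmonic.coeff_natDegree, mul_one]
  let topCoeff : R[X] →ₗ[R] R :=
    lcoeff R (s.card - 1) ∘ₗ modByMonicHom (s.map (X - C ·)).prod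
  calc topCoeff (h * derivative (s.map (X - C ·)).prod)
      = (s.map fun r ↦ topCoeff (h * ((s.erase r).map (X - C ·)).prod)).sum := by
        simp only [derivative_prod, derivative_X_sub_C, mul_one, ← Multiset.sum_map_mul_left,
          map_multiset_sum, Multiset.map_map, Function.comp_def]
    _ = (s.map (h.eval ·)).sum := congrArg _ (Multiset.map_congr rfl top_coeff_summand)

lemma sum_aeval_aroots_eq_coeff_modByMonic {F : R[X]} (hF : F.Monic)
    (hsplits : (F.map (algebraMap R S)).Splits) (h : R[X]) :
    ((F.aroots S).map fun α ↦ aeval α h).sum =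
      algebraMap R S ((h * derivative F %ₘ F).coeff (F.natDegree - 1)) := by
  have hprod : ((F.aroots S).map (X - C ·)).prod = F.map (algebraMap R S) :=
    (hsplits.eq_prod_roots_of_monic (hF.map _)).symm
  have hcard : (F.aroots S).card = F.natDegree := by
    rw [aroots_def, ← hsplits.natDegree_eq_card_roots, hF.natDegree_map]
  rw [← coeff_map, map_modByMonic _ hF, Polynomial.map_mul, ← derivative_map, ← hprod, ← hcard,
    coeff_mul_derivative_modByMonic_prod_X_sub_C]
  simp only [eval_map_algebraMap]

lemma mul_derivative_sq_add_C_mul_X_modByMonic {A k : R[X]} (hA : A.Monic)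
    (hdeg : A.natDegree = k.natDegree + 1) (b : R) :
    k * A * derivative (A ^ 2 + C b * X) %ₘ (A ^ 2 + C b * X) =
      C b * (k * A - 2 * (X * k * derivative A)) := by
  nontriviality R
  have hpos : 0 < A.natDegree := by lia
  have hmonic := monic_sq_add_C_mul_X hA hpos b
  refine (div_modByMonic_unique (2 * k * derivative A) _ hmonic ⟨?_, ?_⟩).2
  · simp only [derivative_add, derivative_sq, derivative_C_mul, derivative_X, C_ofNat]
    ring
  · refine degree_lt_degree ?_
    rw [natDegree_sq_add_C_mul_X hA hpos]
    have hkA : (k * A).natDegree ≤ k.natDegree + A.natDegree := natDegree_mul_le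
    have hXkA' : (2 * (X * k * derivative A)).natDegree ≤ k.natDegree + A.natDegree :=
      calc (2 * (X * k * derivative A)).natDegree
          ≤ 0 + (1 + k.natDegree + (A.natDegree - 1)) :=
            natDegree_mul_le_of_le (natDegree_ofNat 2).le <| natDegree_mul_le_of_le
              (natDegree_mul_le_of_le natDegree_X_le le_rfl) (natDegree_derivative_le A)
        _ = k.natDegree + A.natDegree := by lia
    calc (C b * (k * A - 2 * (X * k * derivative A))).natDegree
        ≤ (k * A - 2 * (X * k * derivative A)).natDegree := natDegree_C_mul_le _ _
      _ ≤ k.natDegree + A.natDegree := natDegree_sub_le_of_le hkA hXkA' |>.trans (max_self _).le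
      _ < 2 * A.natDegree := by lia

lemma sum_aeval_aroots_sq_add_C_mul_X {A k : R[X]} (hA : A.Monic) (hk : k.Monic)
    (hdeg : A.natDegree = k.natDegree + 1) (b : R)
    (hsplits : ((A ^ 2 + C b * X).map (algebraMap R S)).Splits) :
    (((A ^ 2 + C b * X).aroots S).map fun α ↦ aeval α (k * A)).sum =
      algebraMap R S (b * (1 - 2 * A.natDegree)) := by
  have hpos : 0 < A.natDegree := by lia
  have hkA : (k * A).coeff (A.natDegree + k.natDegree) = 1 := by
    rw [add_comm, coeff_mul_degree_add_degree, hk.leadingCoeff, hA.leadingCoeff, one_mul]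
  rw [sum_aeval_aroots_eq_coeff_modByMonic (monic_sq_add_C_mul_X hA hpos b)
      hsplits, natDegree_sq_add_C_mul_X hA hpos,
    mul_derivative_sq_add_C_mul_X_modByMonic hA hdeg,
    show 2 * A.natDegree - 1 = A.natDegree + k.natDegree by lia, coeff_C_mul, coeff_sub,
    coeff_ofNat_mul, hkA, coeff_X_mul_mul_derivative hA hk hdeg]

end CommRing

section CriticalOrbit

lemma a_succ (n : ℕ) : a (n + 1) = a n ^ 2 + X := rfl

lemma a_one : a 1 = X := by simp [a]

lemma a_succ_add_a_one (n : ℕ) : a (n + 1) + a 1 = a n ^ 2 + C 2 * X := by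
  rw [a_succ, a_one, C_ofNat]
  ring

lemma a_two_add_a_one : a 2 + a 1 = X * (X - C (-2)) := by
  rw [a_succ_add_a_one, a_one, C_neg]
  ring

lemma a_two_add_a_one_ne_zero : a 2 + a 1 ≠ 0 := by
  rw [a_two_add_a_one]
  exact mul_ne_zero X_ne_zero (X_sub_C_ne_zero _)

lemma monic_and_natDegree_a_succ (n : ℕ) :
    (a (n + 1)).Monic ∧ (a (n + 1)).natDegree = 2 ^ n := by
  induction n with
  | zero => simp [a_one, monic_X]
  | succ n ih =>
    obtain ⟨hmonic, hdeg⟩ := ih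
    have hpos : 0 < (a (n + 1)).natDegree := by simp [hdeg]
    rw [a_succ (n + 1), ← one_mul X, ← C_1, natDegree_sq_add_C_mul_X hmonic hpos, hdeg,
      pow_succ' 2 n]
    exact ⟨monic_sq_add_C_mul_X hmonic hpos 1, rfl⟩

lemma monic_a_succ (n : ℕ) : (a (n + 1)).Monic := (monic_and_natDegree_a_succ n).1

lemma natDegree_a_succ (n : ℕ) : (a (n + 1)).natDegree = 2 ^ n := (monic_and_natDegree_a_succ n).2

lemma monic_prod_a (n : ℕ) : (∏ i ∈ range n, a (i + 1)).Monic :=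
  monic_prod_of_monic _ _ fun i _ ↦ monic_a_succ i

lemma natDegree_prod_a_add_one (n : ℕ) : (∏ i ∈ range n, a (i + 1)).natDegree + 1 = 2 ^ n := by
  rw [natDegree_prod_of_monic _ _ fun i _ ↦ monic_a_succ i]
  simp only [natDegree_a_succ, Nat.geomSum_eq le_rfl]
  have := Nat.one_le_two_pow (n := n)
  lia

lemma sum_aeval_prod_a_aroots {K : Type*} [Field K] [IsAlgClosed K] (n : ℕ) :
    (((a (n + 2) + a 1).aroots K).map fun α ↦ aeval α (∏ i ∈ range (n + 1), a (i + 1))).sum =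
      2 * (1 - 2 ^ (n + 1)) := by
  rw [a_succ_add_a_one, prod_range_succ, sum_aeval_aroots_sq_add_C_mul_X (monic_a_succ n)
    (monic_prod_a n) (by rw [natDegree_a_succ, natDegree_prod_a_add_one]) 2
    (IsAlgClosed.splits _), natDegree_a_succ]
  simp [pow_succ']

lemma aeval_zero_a {R : Type*} [Ring R] (n : ℕ) : aeval (0 : R) (a n) = 0 := by
  induction n with
  | zero => simp [a]
  | succ n ih => simp [a_succ, ih]

lemma aeval_neg_two_a_add_two {R : Type*} [Ring R] (n : ℕ) :
    aeval (-2 : R) (a (n + 2)) = 2 := by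
  induction n with
  | zero => norm_num [a]
  | succ n ih => norm_num [a_succ (n + 2), ih]

end CriticalOrbit

section Multiplier

lemma lam_zero (m : ℕ) {n : ℕ} (hn : n ≠ 0) : lam m n 0 = 0 := by
  simp [lam, aeval_zero_a, hn]

lemma lam_neg_two (m n : ℕ) : lam (m + 2) n (-2) = 2 ^ (2 * n) := by
  have hshift (i : ℕ) : m + 2 + i = m + i + 2 := by ring
  simp only [lam, hshift, aeval_neg_two_a_add_two, prod_const, card_range]
  ring

lemma lam_eq_of_aeval_eq_zero {n : ℕ} {α : ℂ} (hα : aeval α (a (n + 2) + a 1) = 0) :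
    lam 2 (n + 1) α = -2 ^ (n + 1) * aeval α (∏ i ∈ range (n + 1), a (i + 1)) := by
  have hlast : aeval α (a (n + 2)) = -aeval α (a 1) := by
    rw [map_add] at hα
    exact eq_neg_of_add_eq_zero_left hα
  have hshift (i : ℕ) : 2 + i = i + 1 + 1 := by ring
  rw [lam, prod_range_succ, map_prod, prod_range_succ']
  simp only [hshift, hlast]
  ring

lemma sum_lam_aroots (n : ℕ) :
    (((a (n + 2) + a 1).aroots ℂ).map (lam 2 (n + 1))).sum =
      2 ^ (n + 2) * (2 ^ (n + 1) - 1) := by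
  have hlam : ∀ α ∈ (a (n + 2) + a 1).aroots ℂ,
      lam 2 (n + 1) α = -2 ^ (n + 1) * aeval α (∏ i ∈ range (n + 1), a (i + 1)) :=
    fun α hα ↦ lam_eq_of_aeval_eq_zero (mem_aroots'.1 hα).2
  rw [Multiset.map_congr rfl hlam, Multiset.sum_map_mul_left, sum_aeval_prod_a_aroots]
  ring

end Multiplier

section Misiurewicz

lemma toRF_injective : Function.Injective toRF :=
  (RatFunc.algebraMap_injective ℚ).comp (map_injective _ (RingHom.injective_int _))

lemma toRF_mul (f g : ℤ[X]) : toRF (f * g) = toRF f * toRF g := by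
  simp [toRF]

lemma toRF_ne_zero {f : ℤ[X]} (hf : f ≠ 0) : toRF f ≠ 0 :=
  fun h ↦ hf (toRF_injective (h.trans (by simp [toRF])))

lemma Gform_two_prime {p : ℕ} (hp : p.Prime) :
    Gform 2 p = toRF (a (p + 1) + a 1) / toRF (a 2 + a 1) := by
  have hndvd : ¬p ∣ 2 - 1 := hp.not_dvd_one
  rw [Gform, if_neg hndvd, mul_one, hp.prod_divisors, Nat.div_self hp.pos, Nat.div_one,
    ArithmeticFunction.moebius_apply_prime hp, ArithmeticFunction.moebius_apply_one, zpow_one,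
    zpow_neg_one, show 2 + p - 1 = p + 1 by lia, div_eq_mul_inv]

lemma IsMisiurewicz.mul_a_two_add_a_one {p : ℕ} (hp : p.Prime) {G : ℤ[X]}
    (hG : IsMisiurewicz 2 p G) : G * (a 2 + a 1) = a (p + 1) + a 1 := by
  apply toRF_injective
  rw [toRF_mul, hG.2, Gform_two_prime hp, div_mul_cancel₀ _ (toRF_ne_zero a_two_add_a_one_ne_zero)]

lemma trP_eq_sum_aroots (m n : ℕ) (G : ℤ[X]) : trP m n G = ((G.aroots ℂ).map (lam m n)).sum :=
  rfl

lemma IsMisiurewicz.aroots_a_succ_add_a_one {p : ℕ} (hp : p.Prime) {G : ℤ[X]}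
    (hG : IsMisiurewicz 2 p G) : (a (p + 1) + a 1).aroots ℂ = G.aroots ℂ + ({0} + {-2}) := by
  rw [← hG.mul_a_two_add_a_one hp, aroots_mul (mul_ne_zero hG.1.ne_zero a_two_add_a_one_ne_zero),
    a_two_add_a_one, aroots_mul (a_two_add_a_one ▸ a_two_add_a_one_ne_zero), aroots_X,
    aroots_X_sub_C]
  simp

end Misiurewicz

lemma padicValInt_pow_sub_pow {q : ℕ} [hq : Fact q.Prime] {m n : ℕ} (hmn : m < n) :
    padicValInt q (q ^ n - q ^ m) = m := by
  have hfactor : (q : ℤ) ^ n - q ^ m = q ^ m * (q ^ (n - m) - 1) := by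
    rw [mul_sub, ← pow_add, Nat.add_sub_cancel' hmn.le, mul_one]
  have hndvd : ¬(q : ℤ) ∣ q ^ (n - m) - 1 := by
    rw [dvd_sub_right (dvd_pow_self _ (Nat.sub_ne_zero_of_lt hmn))]
    exact_mod_cast hq.out.not_dvd_one
  have hne : (q : ℤ) ^ (n - m) - 1 ≠ 0 := fun h ↦ hndvd (h ▸ dvd_zero _)
  rw [hfactor, padicValInt.mul (pow_ne_zero _ (mod_cast hq.out.ne_zero)) hne,
    padicValInt.eq_zero_of_not_dvd hndvd, ← Nat.cast_pow, padicValInt.of_nat,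
    padicValNat.prime_pow, add_zero]

theorem trace_P_2_p_general (p : ℕ) (hp : p.Prime) (G : Polynomial ℤ)
    (hG : IsMisiurewicz 2 p G) :
    trP 2 p G = ((2 ^ (2 * p) - 2 ^ (p + 1) : ℤ) : ℂ) ∧
      padicValInt 2 (2 ^ (2 * p) - 2 ^ (p + 1)) = p + 1 := by
  refine ⟨?_, padicValInt_pow_sub_pow (by have := hp.two_le; lia)⟩
  obtain ⟨n, rfl⟩ := Nat.exists_eq_add_one_of_ne_zero hp.ne_zero
  have hsum := sum_lam_aroots n
  simp only [hG.aroots_a_succ_add_a_one hp, Multiset.map_add, Multiset.sum_add,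
    Multiset.map_singleton, Multiset.sum_singleton, ← trP_eq_sum_aroots,
    lam_zero 2 n.succ_ne_zero, lam_neg_two 0] at hsum
  push_cast
  linear_combination hsum

/-- For any odd prime `p`, `tr(P_{2,p}) = 2^{2p} − 2^{p+1}`, and hence
`v_2(tr(P_{2,p})) = p + 1`. -/
theorem trace_P_2_p (p : ℕ) (hp : p.Prime) (hodd : Odd p)
    (G : Polynomial ℤ) (hG : IsMisiurewicz 2 p G) :
    trP 2 p G = ((2 ^ (2 * p) - 2 ^ (p + 1) : ℤ) : ℂ) ∧
      padicValInt 2 (2 ^ (2 * p) - 2 ^ (p + 1)) = p + 1 :=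
  trace_P_2_p_general p hp G hG
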